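/- The Lebesgue constant for polynomial interpolation at m ≥ 2 Chebyshev (Clenshaw-Curtis) points satisfies Λ_m ≤ (2/π) log(m - 1) + 1. -/

import Mathlib

open Real

/-!
By symmetry take the nodes `cos (2kh)`, `k ≤ n`, where `n = m - 1` and `h = π / (2n)`, and put
`x = cos θ`. The polynomial `(X² - 1) U_{n-1}` vanishes at the nodes, so its values and derivatives
give `|l_k(x)| = |sin nθ| / n * w_k * |sin θ / (cos (2kh) - cos θ)|` with trapezoidal weights `w_k`,
and `sin θ / (cos (2kh) - cos θ)` is the mean of `cot (θ/2 - kh)` and `cot (θ/2 + kh)`. Writing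
`θ = 2 (p + s) h` with `0 < s < 1`, the terms with `k ≤ p` therefore add up to
`½ ∑_{j ≤ 2p} cot ((j + s) h)`, and the remaining ones, after the reflection `θ ↦ π - θ`, to a
similar sum with `1 - s` in place of `s`. Both sums only grow when their range is changed to
`j < n`. For each `j`, the factor `sin (s π) = |sin nθ|` makes `s = ½` the worst case, so that the
Lebesgue function is at most `1/n * ∑_{j < n} cot ((2j + 1) π / (4n))`. By a midpoint estimate for
`∫ cot`, the terms `j ≥ 1` are controlled by `-log (sin h)`; the resulting bound is an equality for
`n = 1`, and Wilker's inequality shows that it improves as `n` grows.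
-/

section Trigonometry

theorem hasDerivAt_cot {x : ℝ} (hx : sin x ≠ 0) : HasDerivAt cot (-1 / sin x ^ 2) x := by
  have hfun : cot = fun y => cos y / sin y := funext cot_eq_cos_div_sin
  rw [hfun]
  convert! (hasDerivAt_cos x).div (hasDerivAt_sin x) hx using 2
  linear_combination sin_sq_add_cos_sq x

theorem cot_nonneg_of_nonneg_of_le_pi_div_two {x : ℝ} (hx₀ : 0 ≤ x) (hx : x ≤ π / 2) :
    0 ≤ cot x := by
  rw [← tan_inv_eq_cot]
  exact inv_nonneg.2 (tan_nonneg_of_nonneg_of_le_pi_div_two hx₀ hx)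

theorem cot_nonpos_of_pi_div_two_le_of_le {x : ℝ} (hx : π / 2 ≤ x) (hxπ : x ≤ π) :
    cot x ≤ 0 := by
  rw [cot_eq_cos_div_sin]
  exact div_nonpos_of_nonpos_of_nonneg (cos_nonpos_of_pi_div_two_le_of_le hx (by linarith))
    (sin_nonneg_of_nonneg_of_le_pi (by linarith [pi_pos]) hxπ)

theorem cot_add_cot {a b : ℝ} (ha : sin a ≠ 0) (hb : sin b ≠ 0) :
    cot a + cot b = sin (a + b) / (sin a * sin b) := by
  rw [cot_eq_cos_div_sin, cot_eq_cos_div_sin, sin_add]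
  field_simp
  ring

theorem sin_add_div_cos_sub_sub_cos_add {a b : ℝ} (ha : sin a ≠ 0) (hb : sin b ≠ 0) :
    sin (a + b) / (cos (a - b) - cos (a + b)) = (cot a + cot b) / 2 := by
  have hprod : cos (a - b) - cos (a + b) = sin a * sin b * 2 := by
    rw [cos_sub, cos_add]
    ring
  rw [cot_add_cot ha hb, hprod, div_div]

theorem add_cube_div_three_le_tan {t : ℝ} (ht₀ : 0 ≤ t) (ht : t < π / 2) :
    t + t ^ 3 / 3 ≤ tan t := by
  have hcos {y : ℝ} (hy : y ∈ Set.Ico 0 (π / 2)) : cos y ≠ 0 :=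
    (cos_pos_of_mem_Ioo ⟨by linarith [hy.1, pi_pos], hy.2⟩).ne'
  have hderiv {y : ℝ} (hy : y ∈ Set.Ico 0 (π / 2)) :
      HasDerivAt (fun y => tan y - (y + y ^ 3 / 3)) (tan y ^ 2 - y ^ 2) y := by
    convert! (hasDerivAt_tan (hcos hy)).sub
      ((hasDerivAt_id y).add ((hasDerivAt_pow 3 y).div_const 3)) using 1
    have hsec : 1 / cos y ^ 2 = 1 + tan y ^ 2 := by
      rw [← inv_one_add_tan_sq (hcos hy), one_div, inv_inv]
    rw [hsec]
    push_cast
    ring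
  have hmono : MonotoneOn (fun y => tan y - (y + y ^ 3 / 3)) (Set.Ico 0 (π / 2)) := by
    refine monotoneOn_of_deriv_nonneg (convex_Ico _ _)
      (fun y hy => (hderiv hy).continuousAt.continuousWithinAt)
      (fun y hy => (hderiv (interior_subset hy)).differentiableAt.differentiableWithinAt)
      fun y hy => ?_
    have hy := interior_subset hy
    rw [(hderiv hy).deriv, sub_nonneg]
    exact pow_le_pow_left₀ hy.1 (le_tan hy.1 hy.2) 2
  simpa using hmono ⟨le_rfl, by positivity⟩ ⟨ht₀, ht⟩ ht₀

/-- **Wilker's inequality**. -/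
theorem two_le_sin_div_sq_add_tan_div {t : ℝ} (ht₀ : 0 < t) (ht : t < π / 2) :
    2 ≤ (sin t / t) ^ 2 + tan t / t := by
  have ht_sq : t ^ 2 ≤ 6 := by nlinarith [pi_lt_d2]
  have hsin : 1 - t ^ 2 / 6 ≤ sin t / t := by
    rw [le_div_iff₀ ht₀]
    linarith [sin_ge_sub_cube ht₀.le]
  have htan : 1 + t ^ 2 / 3 ≤ tan t / t := by
    rw [le_div_iff₀ ht₀]
    linarith [add_cube_div_three_le_tan ht₀.le ht]
  calc 2 ≤ (1 - t ^ 2 / 6) ^ 2 + (1 + t ^ 2 / 3) := by linarith [sq_nonneg (t ^ 2)]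
    _ ≤ (sin t / t) ^ 2 + tan t / t :=
        add_le_add (pow_le_pow_left₀ (by linarith) hsin 2) htan

theorem sin_nat_mul_mul_sin_le {u τ : ℝ} (hu : 0 ≤ u) (huτ : u ≤ τ) (n : ℕ) (hn : n * τ ≤ π) :
    sin (n * τ) * sin u ≤ sin (n * u) * sin τ := by
  induction n with
  | zero => simp
  | succ n ih =>
    obtain rfl | hn_pos := n.eq_zero_or_pos
    · simp [mul_comm]
    have hn_one : (1 : ℝ) ≤ n := by exact_mod_cast hn_pos
    push_cast at hn ⊢
    have hτ : τ ≤ π / 2 := by nlinarith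
    have hnu : (n : ℝ) * u ≤ n * τ := by gcongr
    have hsin_u : 0 ≤ sin u := sin_nonneg_of_nonneg_of_le_pi hu (by linarith)
    have hsin_τ : 0 ≤ sin τ := sin_nonneg_of_nonneg_of_le_pi (by linarith) (by linarith)
    have hsin_nτ : 0 ≤ sin (n * τ) := sin_nonneg_of_nonneg_of_le_pi (by nlinarith) (by linarith)
    have hcos_u : 0 ≤ cos u := cos_nonneg_of_mem_Icc ⟨by linarith, by linarith⟩
    have hcos : cos τ ≤ cos u := cos_le_cos_of_nonneg_of_le_pi hu (by linarith) huτ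
    have hcos_n : cos (n * τ) ≤ cos (n * u) :=
      cos_le_cos_of_nonneg_of_le_pi (by positivity) (by linarith) hnu
    have ih := ih (by linarith)
    rw [add_mul, add_mul, one_mul, one_mul, sin_add, sin_add]
    calc (sin (n * τ) * cos τ + cos (n * τ) * sin τ) * sin u
        = sin (n * τ) * sin u * cos τ + cos (n * τ) * (sin τ * sin u) := by ring
      _ ≤ sin (n * τ) * sin u * cos u + cos (n * u) * (sin τ * sin u) := by gcongr
      _ ≤ sin (n * u) * sin τ * cos u + cos (n * u) * (sin τ * sin u) := by gcongr
      _ = (sin (n * u) * cos u + cos (n * u) * sin u) * sin τ := by ring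

theorem sin_sq_le_two_mul_sin_nat_mul_sq_mul {n : ℕ} {u τ : ℝ} (hτ : n * τ = π / 4)
    (hu : |u| ≤ τ) : sin u ^ 2 ≤ 2 * sin (n * u) ^ 2 * sin τ ^ 2 := by
  wlog hu₀ : 0 ≤ u generalizing u
  · simpa using this (u := -u) (by rwa [abs_neg]) (by linarith)
  have hτ_le : τ ≤ π := by
    have hn : (1 : ℝ) ≤ n := by
      refine Nat.one_le_cast.2 (Nat.one_le_iff_ne_zero.2 fun hn => ?_)
      rw [hn, Nat.cast_zero, zero_mul] at hτ
      linarith [pi_pos]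
    nlinarith [pi_pos, abs_nonneg u]
  have huτ : u ≤ τ := (le_abs_self u).trans hu
  have hsin_u : 0 ≤ sin u := sin_nonneg_of_nonneg_of_le_pi hu₀ (huτ.trans hτ_le)
  have hle : √2 / 2 * sin u ≤ sin (n * u) * sin τ := by
    simpa only [hτ, sin_pi_div_four] using
      sin_nat_mul_mul_sin_le hu₀ huτ n (by linarith [pi_pos])
  have hsq := pow_le_pow_left₀ (by positivity) hle 2
  rw [mul_pow, mul_pow, div_pow, sq_sqrt zero_le_two] at hsq
  linarith

theorem cos_mul_cot_sub_add_cot_add_le {n : ℕ} {u τ c : ℝ} (hτ : n * τ = π / 4) (hu : |u| < τ)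
    (hτc : τ ≤ c) (hc : c ≤ π / 2) :
    cos (2 * (n * u)) * (cot (c - u) + cot (c + u)) / 2 ≤ cot c := by
  obtain ⟨hu_neg, hu_pos⟩ := abs_lt.1 hu
  have hsin_c : 0 < sin c := sin_pos_of_pos_of_lt_pi (by linarith) (by linarith [pi_pos])
  have hsin_sub : 0 < sin (c - u) := sin_pos_of_pos_of_lt_pi (by linarith) (by linarith)
  have hsin_add : 0 < sin (c + u) := sin_pos_of_pos_of_lt_pi (by linarith) (by linarith)
  have hprod : sin (c - u) * sin (c + u) = sin c ^ 2 - sin u ^ 2 := by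
    rw [sin_sub, sin_add]
    linear_combination sin c ^ 2 * sin_sq_add_cos_sq u - sin u ^ 2 * sin_sq_add_cos_sq c
  have hsin_mono : sin τ ^ 2 ≤ sin c ^ 2 :=
    pow_le_pow_left₀ (sin_nonneg_of_nonneg_of_le_pi (by linarith) (by linarith))
      (sin_le_sin_of_le_of_le_pi_div_two (by linarith) hc hτc) 2
  have hweight : cos (2 * (n * u)) * sin c ^ 2 ≤ sin (c - u) * sin (c + u) := by
    have hsin_u : sin u ^ 2 ≤ 2 * sin (n * u) ^ 2 * sin c ^ 2 :=
      (sin_sq_le_two_mul_sin_nat_mul_sq_mul hτ hu.le).trans (by gcongr)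
    rw [hprod, cos_two_mul, cos_sq']
    linarith
  calc cos (2 * (n * u)) * (cot (c - u) + cot (c + u)) / 2
      = cot c * (cos (2 * (n * u)) * sin c ^ 2 / (sin (c - u) * sin (c + u))) := by
        rw [cot_add_cot hsin_sub.ne' hsin_add.ne', sub_add_add_cancel, ← two_mul, sin_two_mul,
          cot_eq_cos_div_sin]
        field_simp
    _ ≤ cot c * 1 := by
        gcongr
        · exact cot_nonneg_of_nonneg_of_le_pi_div_two (by linarith) hc
        · rwa [div_le_one (by positivity)]
    _ = cot c := mul_one _

end Trigonometry

section CotangentSum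

theorem monotoneOn_two_mul_mul_cot_add_log_sub_log_sin :
    MonotoneOn (fun t => 2 * t * cot t + log t - log (sin (2 * t))) (Set.Ioo 0 (π / 2)) := by
  have hderiv {t : ℝ} (ht : t ∈ Set.Ioo 0 (π / 2)) :
      HasDerivAt (fun t => 2 * t * cot t + log t - log (sin (2 * t)))
        (t / sin t ^ 2 * ((sin t / t) ^ 2 + tan t / t - 2)) t := by
    have ht₀ : t ≠ 0 := ht.1.ne'
    have hsin : sin t ≠ 0 := (sin_pos_of_pos_of_lt_pi ht.1 (by linarith [ht.2, pi_pos])).ne'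
    have hcos : cos t ≠ 0 := (cos_pos_of_mem_Ioo ⟨by linarith [ht.1, pi_pos], ht.2⟩).ne'
    have hsin_two : sin (2 * t) ≠ 0 := by
      rw [sin_two_mul]
      positivity
    have hdouble : HasDerivAt (fun t : ℝ => 2 * t) 2 t := by
      simpa using (hasDerivAt_id t).const_mul 2
    convert! ((hdouble.mul (hasDerivAt_cot hsin)).add (hasDerivAt_log ht₀)).sub
      (hdouble.sin.log hsin_two) using 1
    rw [cot_eq_cos_div_sin, tan_eq_sin_div_cos, sin_two_mul, cos_two_mul']
    field_simp
    linear_combination (-t * sin t) * sin_sq_add_cos_sq t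
  refine monotoneOn_of_deriv_nonneg (convex_Ioo _ _)
    (fun t ht => (hderiv ht).continuousAt.continuousWithinAt)
    (fun t ht => (hderiv (interior_subset ht)).differentiableAt.differentiableWithinAt)
    fun t ht => ?_
  have ht := interior_subset ht
  rw [(hderiv ht).deriv]
  exact mul_nonneg (div_nonneg ht.1.le (sq_nonneg _))
    (sub_nonneg.2 (two_le_sin_div_sq_add_tan_div ht.1 ht.2))

theorem two_mul_mul_cot_add_log_sub_log_sin_le {t : ℝ} (ht₀ : 0 < t) (ht : t ≤ π / 4) :
    2 * t * cot t + log t - log (sin (2 * t)) ≤ π / 2 + log (π / 4) := by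
  have hmono := monotoneOn_two_mul_mul_cot_add_log_sub_log_sin ⟨ht₀, by linarith [pi_pos]⟩
    (⟨by positivity, by linarith [pi_pos]⟩ : π / 4 ∈ Set.Ioo 0 (π / 2)) ht
  have hcot : cot (π / 4) = 1 := by rw [← tan_inv_eq_cot, tan_pi_div_four, inv_one]
  have hsin : sin (2 * (π / 4)) = 1 := by
    rw [← sin_pi_div_two]
    ring_nf
  simp only [hcot, hsin, log_one] at hmono
  linarith

theorem two_mul_mul_cot_le_log_sin_sub_log_sin {c d : ℝ} (hd : 0 ≤ d) (hdc : d < c)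
    (hc : c ≤ π / 2) : 2 * d * cot c ≤ log (sin (c + d)) - log (sin (c - d)) := by
  have hsin_c : 0 < sin c := sin_pos_of_pos_of_lt_pi (by linarith) (by linarith)
  have hsin_sub : 0 < sin (c - d) := sin_pos_of_pos_of_lt_pi (by linarith) (by linarith)
  have hsin_add : 0 < sin (c + d) := sin_pos_of_pos_of_lt_pi (by linarith) (by linarith)
  have hcos_d : 0 < cos d := cos_pos_of_mem_Ioo ⟨by linarith, by linarith⟩
  have hcot : 0 ≤ cot c := cot_nonneg_of_nonneg_of_le_pi_div_two (by linarith) hc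
  have hcos_c : 0 ≤ cos c := cos_nonneg_of_mem_Icc ⟨by linarith, hc⟩
  have hsin_d : 0 ≤ sin d := sin_nonneg_of_nonneg_of_le_pi hd (by linarith)
  set y := 2 * (cos c * sin d) / sin (c - d) with hy
  have hone_add : 1 + y = sin (c + d) / sin (c - d) := by
    rw [hy, sin_add]
    field_simp
    rw [sin_sub]
    ring
  have hadd_two : y + 2 = 2 * (sin c * cos d) / sin (c - d) := by
    rw [hy]
    field_simp
    rw [sin_sub]
    ring
  calc 2 * d * cot c ≤ 2 * tan d * cot c := by
        gcongr
        exact le_tan hd (by linarith)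
    _ = 2 * y / (y + 2) := by
        rw [hadd_two, hy, tan_eq_sin_div_cos, cot_eq_cos_div_sin]
        field_simp
    _ ≤ log (1 + y) := le_log_one_add_of_nonneg (by positivity)
    _ = log (sin (c + d)) - log (sin (c - d)) := by
        rw [hone_add, log_div hsin_add.ne' hsin_sub.ne']

theorem sum_range_two_mul_mul_cot_le_log_sin_sub_log_sin {t : ℝ} (ht : 0 < t) (N : ℕ)
    (hN : (2 * N + 1) * t ≤ π / 2) :
    ∑ j ∈ Finset.range N, 2 * t * cot ((2 * (j + 1 : ℕ) + 1) * t) ≤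
      log (sin (2 * (N + 1 : ℕ) * t)) - log (sin (2 * t)) := by
  calc ∑ j ∈ Finset.range N, 2 * t * cot ((2 * (j + 1 : ℕ) + 1) * t)
      ≤ ∑ j ∈ Finset.range N,
          (log (sin (2 * (j + 1 + 1 : ℕ) * t)) - log (sin (2 * (j + 1 : ℕ) * t))) := by
        refine Finset.sum_le_sum fun j hj => ?_
        have hjN : (j + 1 : ℝ) ≤ N := by exact_mod_cast Finset.mem_range.1 hj
        convert! two_mul_mul_cot_le_log_sin_sub_log_sin (c := (2 * (j + 1 : ℕ) + 1) * t) ht.le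
          ?_ ?_ using 4 <;> push_cast
        · ring
        · ring
        · nlinarith [j.cast_nonneg (α := ℝ)]
        · nlinarith
    _ = log (sin (2 * (N + 1 : ℕ) * t)) - log (sin (2 * t)) := by
        rw [Finset.sum_range_sub fun j : ℕ => log (sin (2 * (j + 1 : ℕ) * t))]
        simp

theorem inv_mul_sum_range_cot_le {n : ℕ} (hn : n ≠ 0) :
    (n : ℝ)⁻¹ * ∑ j ∈ Finset.range n, cot ((2 * j + 1) * (π / (4 * n))) ≤
      2 / π * log n + 1 := by
  obtain ⟨N, rfl⟩ := Nat.exists_eq_succ_of_ne_zero hn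
  set n := N.succ
  have hn_one : (1 : ℝ) ≤ n := by simp [n]
  set t := π / (4 * n) with ht
  have ht₀ : 0 < t := by positivity
  have hnt : n * t = π / 4 := by
    rw [ht]
    field_simp
  have htail : ∑ j ∈ Finset.range N, 2 * t * cot ((2 * (j + 1 : ℕ) + 1) * t) ≤
      -log (sin (2 * t)) := by
    have htop : 2 * (N + 1 : ℕ) * t = π / 2 := by linear_combination 2 * hnt
    have hN : (2 * N + 1) * t ≤ π / 2 := by
      push_cast at htop
      linarith
    have hsum := sum_range_two_mul_mul_cot_le_log_sin_sub_log_sin ht₀ N hN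
    rwa [htop, sin_pi_div_two, log_one, zero_sub] at hsum
  have hhead : 2 * t * cot t - log (sin (2 * t)) ≤ π / 2 + log n := by
    have hlog : log (π / 4) = log n + log t := by
      rw [← hnt, log_mul (by positivity) ht₀.ne']
    linarith [two_mul_mul_cot_add_log_sub_log_sin_le ht₀ (by nlinarith)]
  calc (n : ℝ)⁻¹ * ∑ j ∈ Finset.range n, cot ((2 * j + 1) * t)
      = 2 / π * (∑ j ∈ Finset.range N, 2 * t * cot ((2 * (j + 1 : ℕ) + 1) * t) +
          2 * t * cot t) := by
        rw [Finset.sum_range_succ', ← Finset.mul_sum, ← mul_add, ← mul_assoc]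
        congr 1
        · rw [ht]
          field_simp
          norm_num
        · simp
    _ ≤ 2 / π * (log n + π / 2) :=
        mul_le_mul_of_nonneg_left (by linarith) (by positivity)
    _ = 2 / π * log n + 1 := by
        field_simp

end CotangentSum

section LagrangeBasis

open Polynomial

variable {F ι : Type*} [Field F] {s : Finset ι} {v : ι → F}

theorem eq_C_leadingCoeff_mul_nodal {P : F[X]} (hdeg : P.degree = s.card) (hv : Set.InjOn v s)
    (hP : ∀ i ∈ s, P.eval (v i) = 0) : P = C P.leadingCoeff * Lagrange.nodal s v := by
  have hlead : P.leadingCoeff ≠ 0 := by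
    rw [leadingCoeff_ne_zero, ← degree_ne_bot, hdeg]
    exact WithBot.natCast_ne_bot _
  refine eq_of_degree_le_of_eval_index_eq s hv hdeg.le ?_ ?_ fun i hi => ?_
  · rw [degree_C_mul hlead, Lagrange.degree_nodal, hdeg]
  · rw [leadingCoeff_mul, leadingCoeff_C, Lagrange.nodal_monic.leadingCoeff, mul_one]
  · rw [hP i hi, eval_mul, Lagrange.eval_nodal_at_node hi, mul_zero]

variable [DecidableEq ι]

theorem eval_basis_eq_eval_div_eval_derivative_mul {P : F[X]} (hdeg : P.degree = s.card)
    (hv : Set.InjOn v s) (hP : ∀ i ∈ s, P.eval (v i) = 0) {i : ι} (hi : i ∈ s) {x : F}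
    (hx : x ≠ v i) :
    (Lagrange.basis s v i).eval x = P.eval x / (P.derivative.eval (v i) * (x - v i)) := by
  have hlead : P.leadingCoeff ≠ 0 := by
    rw [leadingCoeff_ne_zero, ← degree_ne_bot, hdeg]
    exact WithBot.natCast_ne_bot _
  rw [Lagrange.eval_basis_not_at_node hi hx, Lagrange.nodalWeight_eq_eval_derivative_nodal hi,
    eq_C_leadingCoeff_mul_nodal hdeg hv hP, derivative_C_mul, eval_C_mul, eval_C_mul, mul_assoc,
    mul_div_mul_left _ _ hlead, div_eq_mul_inv, mul_inv]

theorem eval_basis_neg (i : ι) (x : F) :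
    (Lagrange.basis s (-v) i).eval x = (Lagrange.basis s v i).eval (-x) := by
  simp only [Lagrange.basis, Lagrange.basisDivisor, eval_prod, Pi.neg_apply]
  refine Finset.prod_congr rfl fun j _ => ?_
  simp only [eval_mul, eval_C, eval_sub, eval_X]
  rw [neg_sub_neg, ← neg_sub (v i) (v j), inv_neg]
  ring

theorem sum_abs_eval_basis_self [LinearOrder F] [IsStrictOrderedRing F] (hv : Set.InjOn v s)
    {k : ι} (hk : k ∈ s) : ∑ i ∈ s, |(Lagrange.basis s v i).eval (v k)| = 1 := by
  rw [Finset.sum_eq_single_of_mem k hk fun i _ hik => by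
    rw [Lagrange.eval_basis_of_ne hik hk, abs_zero], Lagrange.eval_basis_self hv hk, abs_one]

end LagrangeBasis

section ChebyshevExtrema

open Polynomial Polynomial.Chebyshev

/-- The polynomial `(X² - 1) U_{n-1}`. For `n ≠ 0` its roots are `±1` together with the other
extrema of `T_n` in `[-1, 1]`, so it is a multiple of the nodal polynomial of the
Clenshaw–Curtis points. -/
noncomputable def chebyshevExtremaPoly (R : Type*) [CommRing R] (n : ℤ) : R[X] :=
  (X ^ 2 - 1) * U R (n - 1)

theorem derivative_chebyshevExtremaPoly {R : Type*} [CommRing R] (n : ℤ) :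
    (chebyshevExtremaPoly R n).derivative = X * U R (n - 1) + (n : R[X]) * T R n := by
  have hT := add_one_mul_T_eq_poly_in_U (R := R) (n - 1)
  rw [sub_add_cancel, Int.cast_sub, Int.cast_one, sub_add_cancel] at hT
  simp only [chebyshevExtremaPoly, derivative_mul, derivative_sub, derivative_X_sq,
    derivative_one, hT, map_ofNat]
  ring

theorem degree_chebyshevExtremaPoly {R : Type*} [CommRing R] [IsDomain R] [NeZero (2 : R)]
    {n : ℕ} (hn : n ≠ 0) : (chebyshevExtremaPoly R n).degree = (n + 1 : ℕ) := by
  obtain ⟨m, rfl⟩ := Nat.exists_eq_succ_of_ne_zero hn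
  have hquad : (X ^ 2 - 1 : R[X]).degree = (2 : ℕ) := degree_X_pow_sub_C two_pos 1
  have hU : (U R ((m.succ : ℤ) - 1)).degree = m := by
    rw [Nat.cast_succ, add_sub_cancel_right, degree_U_natCast]
  rw [chebyshevExtremaPoly, degree_mul, hquad, hU, ← Nat.cast_add, add_comm 2]

theorem eval_cos_chebyshevExtremaPoly (n : ℤ) (θ : ℝ) :
    (chebyshevExtremaPoly ℝ n).eval (cos θ) = -(sin θ * sin (n * θ)) := by
  have hU := U_real_cos θ (n - 1)
  rw [Int.cast_sub, Int.cast_one, sub_add_cancel] at hU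
  rw [chebyshevExtremaPoly, eval_mul, eval_sub, eval_pow, eval_X, eval_one, ← hU]
  linear_combination (U ℝ (n - 1)).eval (cos θ) * sin_sq_add_cos_sq θ

theorem eval_node_chebyshevExtremaPoly {n : ℕ} (hn : n ≠ 0) (k : ℕ) :
    (chebyshevExtremaPoly ℝ n).eval (node n k) = 0 := by
  have hnk : ((n : ℤ) : ℝ) * (k * π / n) = k * π := by
    push_cast
    field_simp
  rw [node, eval_cos_chebyshevExtremaPoly, hnk, sin_nat_mul_pi, mul_zero, neg_zero]

/-- The weight of the `k`-th point in the trapezoidal rule with `n` steps of unit length. -/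
noncomputable def trapezoidalWeight (n k : ℕ) : ℝ :=
  if k = 0 ∨ k = n then 1 / 2 else 1

theorem trapezoidalWeight_sub {n k : ℕ} (hk : k ≤ n) :
    trapezoidalWeight n (n - k) = trapezoidalWeight n k := by
  unfold trapezoidalWeight
  grind

theorem abs_eval_node_derivative_chebyshevExtremaPoly {n k : ℕ} (hn : n ≠ 0) (hk : k ≤ n) :
    |(chebyshevExtremaPoly ℝ n).derivative.eval (node n k)| = n / trapezoidalWeight n k := by
  rw [derivative_chebyshevExtremaPoly, eval_add, eval_mul, eval_X, eval_mul, eval_intCast,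
    eval_T_real_node (Finset.mem_Iic.2 hk), trapezoidalWeight]
  by_cases hend : k = 0 ∨ k = n
  · have hU : node n k * (U ℝ (n - 1)).eval (node n k) = n * (-1) ^ k := by
      obtain rfl | rfl := hend
      · simp [node_eq_one, U_eval_one]
      · simp [node_eq_neg_one hn, U_eval_neg_one, Int.negOnePow_sub, mul_comm]
    rw [hU, if_pos hend, Int.cast_natCast, ← two_mul]
    simp [abs_mul, mul_comm]
  · have hlt : node n k < 1 := node_eq_one (n := n) ▸ node_lt hk (by omega)
    have hgt : -1 < node n k := node_eq_neg_one hn ▸ node_lt le_rfl (by omega)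
    have hU : (U ℝ (n - 1)).eval (node n k) = 0 := by
      have hroot := eval_node_chebyshevExtremaPoly hn k
      rw [chebyshevExtremaPoly, eval_mul, eval_sub, eval_pow, eval_X, eval_one] at hroot
      exact (mul_eq_zero.1 hroot).resolve_left (by nlinarith)
    rw [hU, if_neg hend]
    simp [abs_mul]

theorem injective_node (n : ℕ) : Function.Injective fun k : Fin (n + 1) => node n k :=
  fun i j hij => Fin.ext ((strictAntiOn_node n).injOn (by simp [i.is_le]) (by simp [j.is_le]) hij)

theorem abs_eval_basis_node_cos {n : ℕ} (hn : n ≠ 0) {k : Fin (n + 1)} {θ : ℝ}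
    (hθ : cos θ ≠ node n k) :
    |(Lagrange.basis Finset.univ (fun k : Fin (n + 1) => node n k) k).eval (cos θ)| =
      |sin (n * θ)| / n * (trapezoidalWeight n k * (|sin θ| / |node n k - cos θ|)) := by
  rw [eval_basis_eq_eval_div_eval_derivative_mul
    (by rw [degree_chebyshevExtremaPoly hn, Finset.card_fin]) (injective_node n).injOn
    (fun i _ => eval_node_chebyshevExtremaPoly hn i) (Finset.mem_univ k) hθ,
    abs_div, abs_mul, abs_eval_node_derivative_chebyshevExtremaPoly hn k.is_le,
    eval_cos_chebyshevExtremaPoly, abs_neg, abs_mul, abs_sub_comm, Int.cast_natCast]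
  field_simp

end ChebyshevExtrema

section CotangentRearrangement

theorem sum_range_half_add_eq_sum_range (f : ℕ → ℝ) (p : ℕ) :
    ∑ k ∈ Finset.range (p + 1), (if k = 0 then 1 / 2 else 1) * (f (p - k) + f (p + k)) =
      ∑ j ∈ Finset.range (2 * p + 1), f j := by
  have hpos (k : ℕ) : (if k + 1 = 0 then 1 / 2 else 1 : ℝ) = 1 := if_neg k.succ_ne_zero
  rw [show 2 * p + 1 = p + (p + 1) by ring, Finset.sum_range_add f, Finset.sum_range_succ',
    Finset.sum_range_succ' (fun j => f (p + j)), ← Finset.sum_range_reflect f]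
  simp only [hpos, one_mul, Finset.sum_add_distrib, Nat.sub_sub, add_comm 1, if_true, Nat.sub_zero,
    add_zero]
  ring

theorem sin_div_abs_cos_sub_cos_eq_cot_add_cot {α β : ℝ} (hα : 0 ≤ α) (hαβ : α < β)
    (hβ : β ≤ π / 2) :
    sin (2 * β) / |cos (2 * α) - cos (2 * β)| = (cot (β - α) + cot (β + α)) / 2 := by
  have hsin_sub : 0 < sin (β - α) := sin_pos_of_pos_of_lt_pi (by linarith) (by linarith)
  have hsin_add : 0 < sin (β + α) := sin_pos_of_pos_of_lt_pi (by linarith) (by linarith)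
  have hcos : 0 ≤ cos (2 * α) - cos (2 * β) :=
    sub_nonneg.2 (cos_le_cos_of_nonneg_of_le_pi (by linarith) (by linarith) (by linarith))
  rw [abs_of_nonneg hcos, ← sin_add_div_cos_sub_sub_cos_add hsin_sub.ne' hsin_add.ne',
    ← cos_neg (2 * α)]
  ring_nf

theorem sum_range_sin_div_abs_cos_sub_cos_eq {h s : ℝ} (hh : 0 < h) (hs : 0 < s) {p : ℕ}
    (hp : (p + s) * h < π / 2) :
    ∑ k ∈ Finset.range (p + 1), (if k = 0 then 1 / 2 else 1) *
        (sin (2 * ((p + s) * h)) / |cos (2 * (k * h)) - cos (2 * ((p + s) * h))|) =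
      (∑ j ∈ Finset.range (2 * p + 1), cot ((j + s) * h)) / 2 := by
  rw [← sum_range_half_add_eq_sum_range, Finset.sum_div]
  refine Finset.sum_congr rfl fun k hk => ?_
  have hkp : k ≤ p := Nat.lt_succ_iff.1 (Finset.mem_range.1 hk)
  have hkp_mul : k * h ≤ p * h := by gcongr
  have hsh : 0 < s * h := by positivity
  rw [sin_div_abs_cos_sub_cos_eq_cot_add_cot (by positivity) (by linarith) (by linarith),
    Nat.cast_sub hkp, Nat.cast_add]
  ring_nf

theorem sum_range_le_sum_range_of_nonneg_of_nonpos {f : ℕ → ℝ} {m n : ℕ}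
    (hnonneg : ∀ j < n, 0 ≤ f j) (hnonpos : ∀ j < m, n ≤ j → f j ≤ 0) :
    ∑ j ∈ Finset.range m, f j ≤ ∑ j ∈ Finset.range n, f j := by
  obtain hmn | hnm := le_total m n
  · exact Finset.sum_le_sum_of_subset_of_nonneg (Finset.range_subset_range.2 hmn)
      fun j hj _ => hnonneg j (Finset.mem_range.1 hj)
  · rw [← Finset.sum_range_add_sum_Ico _ hnm]
    exact add_le_of_nonpos_right <| Finset.sum_nonpos fun j hj =>
      hnonpos j (Finset.mem_Ico.1 hj).2 (Finset.mem_Ico.1 hj).1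

theorem sum_range_cot_le_sum_range_cot {m n : ℕ} {h s : ℝ} (hh : 0 < h) (hnh : n * h = π / 2)
    (hs : s ∈ Set.Icc 0 1) (hm : m ≤ 2 * n) :
    ∑ j ∈ Finset.range m, cot ((j + s) * h) ≤ ∑ j ∈ Finset.range n, cot ((j + s) * h) := by
  refine sum_range_le_sum_range_of_nonneg_of_nonpos (fun j hj => ?_) fun j hj hnj => ?_
  · have hj : (j + 1 : ℝ) ≤ n := by exact_mod_cast hj
    have hs₀ := hs.1
    exact cot_nonneg_of_nonneg_of_le_pi_div_two (by positivity) (by nlinarith [hs.2])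
  · have hnj : (n : ℝ) ≤ j := by exact_mod_cast hnj
    have hj : (j + 1 : ℝ) ≤ 2 * n := by exact_mod_cast hj.trans_le hm
    exact cot_nonpos_of_pi_div_two_le_of_le (by nlinarith [hs.1]) (by nlinarith [hs.2])

theorem sum_range_trapezoidalWeight_le {n p : ℕ} {h s : ℝ} (hh : 0 < h) (hnh : n * h = π / 2)
    (hs : s ∈ Set.Ioo 0 1) (hp : p < n) :
    ∑ k ∈ Finset.range (p + 1), trapezoidalWeight n k *
        (sin (2 * ((p + s) * h)) / |cos (2 * (k * h)) - cos (2 * ((p + s) * h))|) ≤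
      (∑ j ∈ Finset.range n, cot ((j + s) * h)) / 2 := by
  have hp_le : (p + 1 : ℝ) ≤ n := by exact_mod_cast hp
  calc ∑ k ∈ Finset.range (p + 1), trapezoidalWeight n k *
        (sin (2 * ((p + s) * h)) / |cos (2 * (k * h)) - cos (2 * ((p + s) * h))|)
      = ∑ k ∈ Finset.range (p + 1), (if k = 0 then 1 / 2 else 1) *
          (sin (2 * ((p + s) * h)) / |cos (2 * (k * h)) - cos (2 * ((p + s) * h))|) := by
        refine Finset.sum_congr rfl fun k hk => ?_
        have hkn : k ≠ n := by grind
        simp only [trapezoidalWeight, hkn, or_false]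
    _ = (∑ j ∈ Finset.range (2 * p + 1), cot ((j + s) * h)) / 2 :=
        sum_range_sin_div_abs_cos_sub_cos_eq hh hs.1 (by nlinarith [hs.2])
    _ ≤ (∑ j ∈ Finset.range n, cot ((j + s) * h)) / 2 := by
        have hcot := sum_range_cot_le_sum_range_cot hh hnh (Set.Ioo_subset_Icc_self hs)
          (show 2 * p + 1 ≤ 2 * n by omega)
        linarith

theorem sum_trapezoidalWeight_le_sum_cot_add_cot {n p : ℕ} {h s : ℝ} (hh : 0 < h)
    (hnh : n * h = π / 2) (hs : s ∈ Set.Ioo 0 1) (hp : p < n) :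
    ∑ k ∈ Finset.range (n + 1), trapezoidalWeight n k *
        (sin (2 * ((p + s) * h)) / |cos (2 * (k * h)) - cos (2 * ((p + s) * h))|) ≤
      ∑ j ∈ Finset.range n, (cot ((j + s) * h) + cot ((j + (1 - s)) * h)) / 2 := by
  obtain ⟨r, hr⟩ := Nat.exists_eq_add_of_lt hp
  have hreflect : 2 * ((p + s) * h) = π - 2 * ((r + (1 - s)) * h) := by
    rw [hr] at hnh
    push_cast at hnh
    linear_combination 2 * hnh
  have hupper : ∑ k ∈ Finset.range (r + 1), trapezoidalWeight n (p + 1 + k) *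
      (sin (2 * ((p + s) * h)) / |cos (2 * ((p + 1 + k : ℕ) * h)) - cos (2 * ((p + s) * h))|) =
      ∑ k ∈ Finset.range (r + 1), trapezoidalWeight n k *
        (sin (2 * ((r + (1 - s)) * h)) /
          |cos (2 * (k * h)) - cos (2 * ((r + (1 - s)) * h))|) := by
    rw [← Finset.sum_range_reflect]
    refine Finset.sum_congr rfl fun k hk => ?_
    have hkn : k ≤ n := by grind
    have hindex : p + 1 + (r + 1 - 1 - k) = n - k := by grind
    have hangle : 2 * ((n - k : ℕ) * h) = π - 2 * (k * h) := by
      rw [Nat.cast_sub hkn]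
      linear_combination 2 * hnh
    rw [hindex, trapezoidalWeight_sub hkn, hangle, hreflect, sin_pi_sub, cos_pi_sub, cos_pi_sub,
      neg_sub_neg, abs_sub_comm]
  have hs' : 1 - s ∈ Set.Ioo (0 : ℝ) 1 := ⟨by linarith [hs.2], by linarith [hs.1]⟩
  rw [show n + 1 = p + 1 + (r + 1) by omega, Finset.sum_range_add, hupper, ← Finset.sum_div,
    Finset.sum_add_distrib, add_div]
  exact add_le_add (sum_range_trapezoidalWeight_le hh hnh hs hp)
    (sum_range_trapezoidalWeight_le hh hnh hs' (by omega))

theorem sin_mul_pi_mul_cot_add_cot_le {n j : ℕ} {h s : ℝ} (hh : 0 < h) (hnh : n * h = π / 2)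
    (hs : s ∈ Set.Ioo 0 1) (hj : j < n) :
    sin (s * π) * ((cot ((j + s) * h) + cot ((j + (1 - s)) * h)) / 2) ≤
      cot ((2 * j + 1) * (h / 2)) := by
  have hj : (j + 1 : ℝ) ≤ n := by exact_mod_cast hj
  have hu : |(1 / 2 - s) * h| < h / 2 := by
    rw [abs_lt]
    constructor <;> nlinarith [hs.1, hs.2]
  have hsin : sin (s * π) = cos (2 * (n * ((1 / 2 - s) * h))) := by
    rw [← cos_pi_div_two_sub]
    congr 1
    linear_combination (2 * s - 1) * hnh
  have hcot := cos_mul_cot_sub_add_cot_add_le (n := n) (c := (2 * j + 1) * (h / 2))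
    (by linear_combination hnh / 2) hu (by nlinarith [j.cast_nonneg (α := ℝ)]) (by nlinarith)
  rw [hsin, ← mul_div_assoc]
  convert! hcot using 5 <;> ring

end CotangentRearrangement

section LebesgueFunction

open Polynomial.Chebyshev

theorem exists_lt_eq_add_mem_Ioo_zero_one {n : ℕ} {y : ℝ} (hy₀ : 0 ≤ y) (hyn : y ≤ n)
    (hy : ∀ k ≤ n, y ≠ k) : ∃ p < n, ∃ s ∈ Set.Ioo (0 : ℝ) 1, y = p + s := by
  have hfloor : ⌊y⌋₊ ≤ n := Nat.floor_le_of_le hyn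
  have hlt : (⌊y⌋₊ : ℝ) < y := (Nat.floor_le hy₀).lt_of_ne' (hy _ hfloor)
  refine ⟨⌊y⌋₊, ?_, y - ⌊y⌋₊, ⟨sub_pos.2 hlt, ?_⟩, (add_sub_cancel _ _).symm⟩
  · exact_mod_cast hlt.trans_le hyn
  · linarith [Nat.lt_floor_add_one y]

theorem sum_abs_eval_basis_node_cos {n : ℕ} (hn : n ≠ 0) {θ : ℝ} (hθ : θ ∈ Set.Icc 0 π)
    (hnode : ∀ k : Fin (n + 1), cos θ ≠ node n k) :
    ∑ k, |(Lagrange.basis Finset.univ (fun k : Fin (n + 1) => node n k) k).eval (cos θ)| =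
      |sin (n * θ)| / n *
        ∑ k ∈ Finset.range (n + 1), trapezoidalWeight n k * (sin θ / |node n k - cos θ|) := by
  rw [← Fin.sum_univ_eq_sum_range (fun k => trapezoidalWeight n k * _), Finset.mul_sum]
  refine Finset.sum_congr rfl fun k _ => ?_
  rw [abs_eval_basis_node_cos hn (hnode k), abs_of_nonneg (sin_nonneg_of_mem_Icc hθ)]

theorem sin_mul_pi_div_mul_sum_trapezoidalWeight_le {n p : ℕ} {h s : ℝ} (hh : 0 < h)
    (hnh : n * h = π / 2) (hs : s ∈ Set.Ioo 0 1) (hp : p < n) :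
    sin (s * π) / n * ∑ k ∈ Finset.range (n + 1), trapezoidalWeight n k *
        (sin (2 * ((p + s) * h)) / |cos (2 * (k * h)) - cos (2 * ((p + s) * h))|) ≤
      2 / π * log n + 1 := by
  have hn : n ≠ 0 := hp.ne_bot
  have hsin : 0 ≤ sin (s * π) := sin_nonneg_of_nonneg_of_le_pi
    (mul_nonneg hs.1.le pi_pos.le) (mul_le_of_le_one_left pi_pos.le hs.2.le)
  have hh_half : h / 2 = π / (4 * n) := by
    field_simp
    linarith
  calc sin (s * π) / n * ∑ k ∈ Finset.range (n + 1), trapezoidalWeight n k *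
        (sin (2 * ((p + s) * h)) / |cos (2 * (k * h)) - cos (2 * ((p + s) * h))|)
      ≤ sin (s * π) / n *
          ∑ j ∈ Finset.range n, (cot ((j + s) * h) + cot ((j + (1 - s)) * h)) / 2 :=
        mul_le_mul_of_nonneg_left (sum_trapezoidalWeight_le_sum_cot_add_cot hh hnh hs hp)
          (by positivity)
    _ = (n : ℝ)⁻¹ * ∑ j ∈ Finset.range n,
          sin (s * π) * ((cot ((j + s) * h) + cot ((j + (1 - s)) * h)) / 2) := by
        rw [← Finset.mul_sum]
        ring
    _ ≤ (n : ℝ)⁻¹ * ∑ j ∈ Finset.range n, cot ((2 * j + 1) * (π / (4 * n))) := by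
        gcongr with j hj
        exact hh_half ▸ sin_mul_pi_mul_cot_add_cot_le hh hnh hs (Finset.mem_range.1 hj)
    _ ≤ 2 / π * log n + 1 := inv_mul_sum_range_cot_le hn

theorem sum_abs_eval_basis_node_cos_le {n p : ℕ} {s θ : ℝ} (hp : p < n) (hs : s ∈ Set.Ioo 0 1)
    (hθ : n * θ = (p + s) * π) (hnode : ∀ k : Fin (n + 1), cos θ ≠ node n k) :
    ∑ k, |(Lagrange.basis Finset.univ (fun k : Fin (n + 1) => node n k) k).eval (cos θ)| ≤
      2 / π * log n + 1 := by
  have hn : n ≠ 0 := hp.ne_bot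
  have hp_le : (p + 1 : ℝ) ≤ n := by exact_mod_cast hp
  set h := π / (2 * n) with h_def
  have hh : 0 < h := by positivity
  have hnh : n * h = π / 2 := by
    rw [h_def]
    field_simp
  have hθh : θ = 2 * ((p + s) * h) := by
    refine mul_left_cancel₀ (Nat.cast_ne_zero.2 hn : (n : ℝ) ≠ 0) ?_
    linear_combination hθ - 2 * (p + s) * hnh
  have hθ_mem : θ ∈ Set.Icc 0 π := by
    rw [hθh]
    constructor <;> nlinarith [hs.1, hs.2, p.cast_nonneg (α := ℝ)]
  have hsin : |sin (n * θ)| = sin (s * π) := by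
    rw [hθ, add_mul, add_comm, sin_add_nat_mul_pi, abs_mul, abs_neg_one_pow, one_mul,
      abs_of_nonneg]
    exact sin_nonneg_of_nonneg_of_le_pi (mul_nonneg hs.1.le pi_pos.le)
      (mul_le_of_le_one_left pi_pos.le hs.2.le)
  have hnode_cos (k : ℕ) : node n k = cos (2 * (k * h)) := by
    rw [node, h_def]
    congr 1
    field_simp
  rw [sum_abs_eval_basis_node_cos hn hθ_mem hnode, hsin]
  simp only [hnode_cos, hθh]
  exact sin_mul_pi_div_mul_sum_trapezoidalWeight_le hh hnh hs hp

theorem sum_abs_eval_basis_node_le {n : ℕ} (hn : n ≠ 0) {x : ℝ} (hx : x ∈ Set.Icc (-1) 1) :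
    ∑ k, |(Lagrange.basis Finset.univ (fun k : Fin (n + 1) => node n k) k).eval x| ≤
      2 / π * log n + 1 := by
  by_cases hnode : ∃ k : Fin (n + 1), x = node n k
  · obtain ⟨k, rfl⟩ := hnode
    rw [sum_abs_eval_basis_self (injective_node n).injOn (Finset.mem_univ k)]
    exact le_add_of_nonneg_left (by positivity)
  · push Not at hnode
    rw [← cos_arccos hx.1 hx.2] at hnode ⊢
    have hn_pos : (0 : ℝ) < n := by positivity
    obtain ⟨p, hp, s, hs, hps⟩ := exists_lt_eq_add_mem_Ioo_zero_one (n := n)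
      (y := n * arccos x / π) (by have := arccos_nonneg x; positivity)
      (div_le_of_le_mul₀ pi_pos.le hn_pos.le (by gcongr; exact arccos_le_pi x))
      fun k hk hyk => by
        refine hnode ⟨k, Nat.lt_succ_of_le hk⟩ ?_
        rw [node, ← hyk]
        congr 1
        field_simp
    exact sum_abs_eval_basis_node_cos_le hp hs ((div_eq_iff pi_ne_zero).1 hps) hnode

end LebesgueFunction

/-- The Lebesgue constant for polynomial interpolation at the `m ≥ 2` Clenshaw–Curtis
points `x_j = -cos(π (j-1)/(m-1))` satisfies `Λ_m ≤ (2/π) log(m-1) + 1`, i.e. the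
Lebesgue function `Σ_j |l_j(x)|` is bounded by `(2/π) log(m-1) + 1` on `[-1,1]`. -/
theorem stmt15 (m : ℕ) (hm : 2 ≤ m)
    (nodes : Fin m → ℝ)
    (hnodes : ∀ j : Fin m, nodes j = -Real.cos (Real.pi * (j : ℕ) / (m - 1 : ℕ))) :
    ∀ x ∈ Set.Icc (-1 : ℝ) 1,
      ∑ j : Fin m, |(Lagrange.basis Finset.univ nodes j).eval x| ≤
        (2 / Real.pi) * Real.log (m - 1 : ℕ) + 1 := by
  intro x hx
  obtain ⟨n, rfl⟩ := Nat.exists_eq_add_of_le' (one_le_two.trans hm)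
  have hnodes_eq : nodes = -fun k : Fin (n + 1) => Polynomial.Chebyshev.node n k := by
    funext j
    rw [hnodes, Pi.neg_apply, Polynomial.Chebyshev.node, Nat.add_sub_cancel, mul_comm π]
  simp only [hnodes_eq, eval_basis_neg, Nat.add_sub_cancel]
  exact sum_abs_eval_basis_node_le (by omega) ⟨neg_le_neg hx.2, neg_le.1 hx.1⟩
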